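/- arXiv:2212.07165 — 2 statements merged into one kernel-verified Lean document; each statement's English description precedes it below -/
import Mathlib

section
/- Every finitely generated, residually finite torsion group G embeds into a finitely generated, perfect, infinite, residually finite torsion group Γ; that is, there exists such a group Γ together with an injective group homomorphism G → Γ. (Part (1) of Theorem 1.1, stated without the branch-group conclusion.) -/
/-- A group `G` is residually finite if every non-identity element avoids some
finite-index normal subgroup. -/
def ResiduallyFinite (G : Type*) [Group G] : Prop :=
  ∀ g : G, g ≠ 1 → ∃ N : Subgroup G, N.Normal ∧ N.FiniteIndex ∧ g ∉ N


namespace PerfEmb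

open SemidirectProduct commutatorElement

universe u v

theorem rf_of_hom {G : Type u} [Group G]
    (h : ∀ g : G, g ≠ 1 → ∃ (Q : Type u) (_ : Group Q) (_ : Finite Q) (f : G →* Q), f g ≠ 1) :
    ResiduallyFinite G := by
  intro g hg
  obtain ⟨Q, _, _, f, hf⟩ := h g hg
  exact ⟨f.ker, inferInstance, inferInstance, hf⟩

/-- The permutational wreath product of `H` with the alternating group of degree `n`. -/
abbrev W (n : ℕ) (H : Type*) [Group H] :=
  (Fin n → H) ⋊[mulAutArrow (G := alternatingGroup (Fin n)) (A := Fin n) (M := H)]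
    alternatingGroup (Fin n)

variable {n : ℕ} {H : Type u} [Group H]

theorem W_rf (hH : ResiduallyFinite H) (w : W n H) (hw : w ≠ 1) :
    ∃ (Q : Type u) (_ : Group Q) (_ : Finite Q) (f : W n H →* Q), f w ≠ 1 := by
  have key : ∃ N : Subgroup H, N.Normal ∧ N.FiniteIndex ∧
      (w.right ≠ 1 ∨ ∃ x, w.left x ∉ N) := by
    by_cases h : w.right = 1
    · have : ∃ x, w.left x ≠ 1 := by
        by_contra! hc
        exact hw (SemidirectProduct.ext (funext hc) h)
      obtain ⟨x, hx⟩ := this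
      obtain ⟨N, h1, h2, h3⟩ := hH _ hx
      exact ⟨N, h1, h2, Or.inr ⟨x, h3⟩⟩
    · exact ⟨⊤, inferInstance, inferInstance, Or.inl h⟩
  obtain ⟨N, h1, h2, h3⟩ := key
  have : Finite (H ⧸ N) := inferInstance
  have : Finite (W n (H ⧸ N)) := Finite.of_equiv _ SemidirectProduct.equivProd.symm
  refine ⟨W n (H ⧸ N), inferInstance, this,
    SemidirectProduct.map ((QuotientGroup.mk' N).compLeft (Fin n)) (MonoidHom.id _) ?_, ?_⟩
  · intro g
    rfl
  · intro h
    rcases h3 with h3 | ⟨x, hx⟩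
    · exact h3 (congrArg SemidirectProduct.right h)
    · apply hx
      have := congrFun (congrArg SemidirectProduct.left h) x
      exact (QuotientGroup.eq_one_iff _).1 this

theorem W_tors (hH : Monoid.IsTorsion H) : Monoid.IsTorsion (W n H) := by
  have h1 : Monoid.IsTorsion (Fin n → H) := by
    intro f
    refine isOfFinOrder_iff_pow_eq_one.2 ⟨∏ x, orderOf (f x), ?_, ?_⟩
    · exact Finset.prod_pos fun x _ => (hH (f x)).orderOf_pos
    · funext x
      exact orderOf_dvd_iff_pow_eq_one.1 (Finset.dvd_prod_of_mem _ (Finset.mem_univ x))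
  intro w
  have hr : IsOfFinOrder w.right := isOfFinOrder_of_finite _
  obtain ⟨k, hk, hk1⟩ := isOfFinOrder_iff_pow_eq_one.1 hr
  have h2 : (w ^ k) = inl ((w ^ k).left) := by
    ext
    · simp
    · have : (w ^ k).right = w.right ^ k := map_pow (SemidirectProduct.rightHom) w k
      simp [this, hk1]
  have h3 : IsOfFinOrder (w ^ k) := by
    rw [h2]
    exact MonoidHom.isOfFinOrder _ (h1 _)
  exact (isOfFinOrder_pow.1 h3).resolve_right hk.ne'

/-- Basic elements: `h` in coordinate `x` and `h⁻¹` in coordinate `y`. -/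
def t (x y : Fin n) (h : H) : W n H := inl (Pi.mulSingle x h * Pi.mulSingle y h⁻¹)

/-- The group generated by the alternating group and the basic elements. -/
def Gam (n : ℕ) (S : Set H) : Subgroup (W n H) :=
  Subgroup.closure (Set.range inr ∪ {w | ∃ x y, ∃ h ∈ S, x ≠ y ∧ w = t x y h})

theorem Gam_fg (S : Set H) (hS : S.Finite) : (Gam n S).FG := by
  rw [Subgroup.fg_iff]
  refine ⟨_, rfl, (Set.finite_range _).union ?_⟩
  have : Set.Finite (⋃ x : Fin n, ⋃ y : Fin n, Set.image (t x y) S) :=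
    Set.finite_iUnion fun x => Set.finite_iUnion fun y => hS.image _
  refine this.subset ?_
  rintro w ⟨x, y, h, hS, -, rfl⟩
  simp only [Set.mem_iUnion]
  exact ⟨x, y, h, hS, rfl⟩

theorem conj_t (σ : alternatingGroup (Fin n)) (x y : Fin n) (h : H) :
    inr σ * t x y h * (inr σ)⁻¹ = t (σ.1 x) (σ.1 y) h := by
  have key : ∀ (x : Fin n) (k : H), mulAutArrow σ (Pi.mulSingle x k : Fin n → H) =
      Pi.mulSingle (σ.1 x) k := by
    intro x k
    funext z
    change (Pi.mulSingle x k : Fin n → H) (σ.1⁻¹ z) = _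
    simp only [Pi.mulSingle_apply, Equiv.Perm.inv_eq_iff_eq]
  rw [t, t, ← map_inv, ← inl_aut, map_mul, key, key]

theorem Gam_perfect (hn : 5 ≤ n) (S : Set H) : Gam n S ≤ ⁅Gam n S, Gam n S⁆ := by
  conv_lhs => rw [Gam]
  rw [Subgroup.closure_le]
  have hr : ∀ σ, (inr σ : W n H) ∈ Gam n S := fun σ =>
    Subgroup.subset_closure (Or.inl ⟨σ, rfl⟩)
  rintro w (⟨σ, rfl⟩ | ⟨y, z, h, hS, hyz, rfl⟩)
  · have h1 : (inr : _ →* W n H).range ≤ Gam n S := by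
      rintro _ ⟨σ, rfl⟩
      exact hr σ
    apply Subgroup.commutator_mono h1 h1
    rw [MonoidHom.range_eq_map, ← Subgroup.map_commutator]
    refine ⟨σ, ?_, rfl⟩
    have := commutator_alternatingGroup_eq_top (α := Fin n) (by simpa using hn)
    rw [commutator_def] at this
    rw [this]
    trivial
  · obtain ⟨x, hx⟩ : ∃ x : Fin n, x ∉ ({y, z} : Finset (Fin n)) := by
      by_contra! hc
      have := Finset.card_le_card (fun a _ => hc a : (Finset.univ : Finset (Fin n)) ⊆ _)
      have h2 := Finset.card_le_two (a := y) (b := z)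
      simp at this
      omega
    obtain ⟨u, hu⟩ : ∃ u : Fin n, u ∉ ({y, z, x} : Finset (Fin n)) := by
      by_contra! hc
      have := Finset.card_le_card (fun a _ => hc a : (Finset.univ : Finset (Fin n)) ⊆ _)
      have h2 := Finset.card_le_three (a := y) (b := z) (c := x)
      simp at this
      omega
    simp only [Finset.mem_insert, Finset.mem_singleton, not_or] at hx hu
    -- the three-cycle `y ↦ z ↦ u ↦ y`
    let σ : alternatingGroup (Fin n) := ⟨Equiv.swap y z * Equiv.swap z u, by
      rw [Equiv.Perm.mem_alternatingGroup]
      simp [Equiv.Perm.sign_swap hyz, Equiv.Perm.sign_swap (Ne.symm hu.2.1)]⟩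
    have hσx : σ.1 x = x := by
      simp only [σ, Equiv.Perm.mul_apply]
      rw [Equiv.swap_apply_of_ne_of_ne hx.2 (Ne.symm hu.2.2),
        Equiv.swap_apply_of_ne_of_ne hx.1 hx.2]
    have hσy : σ.1 y = z := by
      simp only [σ, Equiv.Perm.mul_apply]
      rw [Equiv.swap_apply_of_ne_of_ne hyz (Ne.symm hu.1), Equiv.swap_apply_left]
    have hc := conj_t (H := H) σ x y h
    rw [hσx, hσy] at hc
    have ht : t x y h ∈ Gam n S :=
      Subgroup.subset_closure (Or.inr ⟨x, y, h, hS, hx.1, rfl⟩)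
    have : t y z h = ⁅(t x y h)⁻¹, inr σ⁆ := by
      rw [commutatorElement_def, inv_inv, mul_assoc, mul_assoc, ← mul_assoc (inr σ), hc]
      simp only [t]
      rw [← map_inv, ← map_mul]
      congr 1
      funext v
      simp only [Pi.mul_apply, Pi.inv_apply, Pi.mulSingle_apply]
      by_cases h1 : v = x
      · subst h1
        simp [hx.1, hx.2]
      · simp [h1]
        split_ifs <;> simp
    rw [SetLike.mem_coe, this]
    exact Subgroup.commutator_mem_commutator (inv_mem ht) (hr σ)

theorem Gam_single (hn : 5 ≤ n) (S : Set H) (hS : Subgroup.closure S = ⊤) :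
    (∀ (h : H) (x y : Fin n), x ≠ y → t x y h ∈ Gam n S) ∧
    (∀ (y : Fin n) (h : H), h ∈ commutator H → (inl (Pi.mulSingle y h) : W n H) ∈ Gam n S) := by
  have hcomm : ∀ h k : H, (∀ (x y : Fin n), x ≠ y → t x y h ∈ Gam n S) →
      (∀ (x y : Fin n), x ≠ y → t x y k ∈ Gam n S) → ∀ y : Fin n,
      (inl (Pi.mulSingle y ⁅h, k⁆) : W n H) ∈ Gam n S := by
    intro h k hh hk y
    obtain ⟨x, hx⟩ : ∃ x : Fin n, x ∉ ({y} : Finset (Fin n)) := by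
      by_contra! hc
      have := Finset.card_le_card (fun a _ => hc a : (Finset.univ : Finset (Fin n)) ⊆ _)
      simp at this
      omega
    obtain ⟨z, hz⟩ : ∃ z : Fin n, z ∉ ({y, x} : Finset (Fin n)) := by
      by_contra! hc
      have := Finset.card_le_card (fun a _ => hc a : (Finset.univ : Finset (Fin n)) ⊆ _)
      have h2 := Finset.card_le_two (a := y) (b := x)
      simp at this
      omega
    simp only [Finset.mem_insert, Finset.mem_singleton, not_or] at hx hz
    have : (inl (Pi.mulSingle y ⁅h, k⁆) : W n H) = ⁅t y x h, t y z k⁆ := by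
      simp only [t, commutatorElement_def]
      rw [← map_inv, ← map_inv, ← map_mul, ← map_mul, ← map_mul]
      congr 1
      funext v
      simp only [Pi.mul_apply, Pi.inv_apply, Pi.mulSingle_apply]
      by_cases h1 : v = y
      · subst h1
        simp [Ne.symm hx, Ne.symm hz.1]
      · by_cases h2 : v = x
        · subst h2
          simp [h1, Ne.symm hz.2]
        · simp [h1, h2]
    rw [this]
    have h1 := hh y x (Ne.symm hx)
    have h2 := hk y z (Ne.symm hz.1)
    rw [commutatorElement_def]
    exact mul_mem (mul_mem (mul_mem h1 h2) (inv_mem h1)) (inv_mem h2)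
  have hall : ∀ (h : H) (x y : Fin n), x ≠ y → t x y h ∈ Gam n S := by
    intro h
    have hh : h ∈ Subgroup.closure S := hS ▸ Subgroup.mem_top h
    induction hh using Subgroup.closure_induction with
    | mem h hS =>
      intro x y hxy
      exact Subgroup.subset_closure (Or.inr ⟨x, y, h, hS, hxy, rfl⟩)
    | one =>
      intro x y hxy
      have : (t x y (1 : H) : W n H) = 1 := by simp [t]
      rw [this]
      exact one_mem _
    | mul h k _ _ ih ik =>
      intro x y hxy
      have : (t x y (h * k) : W n H) = t x y h * t x y k * (inl (Pi.mulSingle y ⁅h, k⁆))⁻¹ := by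
        simp only [t, commutatorElement_def]
        rw [← map_inv, ← map_mul, ← map_mul]
        congr 1
        funext v
        simp only [Pi.mul_apply, Pi.inv_apply, Pi.mulSingle_apply]
        by_cases h1 : v = x
        · subst h1
          simp [hxy]
        · simp [h1]
          split_ifs <;> simp [mul_assoc]
      rw [this]
      exact mul_mem (mul_mem (ih x y hxy) (ik x y hxy)) (inv_mem (hcomm h k ih ik y))
    | inv h _ ih =>
      intro x y hxy
      have : (t x y h⁻¹ : W n H) = t y x h := by
        simp only [t]
        congr 1
        funext v
        simp only [Pi.mul_apply, Pi.mulSingle_apply]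
        by_cases h1 : v = x
        · subst h1
          simp [hxy]
        · simp [h1]
      rw [this]
      exact ih y x hxy.symm
  refine ⟨hall, fun y h hh => ?_⟩
  have : commutator H ≤ (Gam n S).comap
      ((inl : _ →* W n H).comp (MonoidHom.mulSingle (fun _ : Fin n => H) y)) := by
    rw [commutator_def, Subgroup.commutator_le]
    intro a _ b _
    exact hcomm a b (hall a) (hall b) y
  exact this hh

theorem Gam_diag (hn : 5 ≤ n) (S : Set H) (hS : Subgroup.closure S = ⊤) (g : H)
    (hg : g ^ n ∈ commutator H) : (inl (fun _ => g) : W n H) ∈ Gam n S := by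
  obtain ⟨h1, h2⟩ := Gam_single (n := n) hn S hS
  let z : Fin n := ⟨0, by omega⟩
  have key : ∀ s : Finset (Fin n), (inl ((fun x => if x ∈ s then g else 1) *
      Pi.mulSingle z (g ^ s.card)⁻¹) : W n H) ∈ Gam n S := by
    intro s
    induction s using Finset.induction_on with
    | empty =>
      have : (inl (fun _ => (1 : H)) : W n H) = 1 := rfl
      simp [this]
    | insert x s hx ih =>
      have : (inl ((fun y => if y ∈ insert x s then g else 1) *
          Pi.mulSingle z (g ^ (insert x s).card)⁻¹) : W n H) =
          inl ((fun x => if x ∈ s then g else 1) * Pi.mulSingle z (g ^ s.card)⁻¹) * t x z g := by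
        simp only [t]
        rw [← map_mul]
        congr 1
        funext v
        rw [Finset.card_insert_of_notMem hx]
        simp only [Pi.mul_apply, Pi.mulSingle_apply, Finset.mem_insert]
        by_cases hv : v = x
        · subst hv
          by_cases hz : v = z
          · simp [hz] at hx ⊢
            simp [hx, pow_succ]
          · simp [hz, hx]
        · simp only [hv, false_or, if_false, one_mul]
          by_cases hz : v = z
          · simp [hz, pow_succ', mul_assoc]
          · simp [hz]
      rw [this]
      refine mul_mem ih ?_
      by_cases hxz : x = z
      · have : (t x z g : W n H) = 1 := by
          rw [hxz, t, ← Pi.mulSingle_mul]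
          simp
        rw [this]
        exact one_mem _
      · exact h1 g x z hxz
  have h3 := mul_mem (key Finset.univ) (h2 z _ hg)
  rw [← map_mul, mul_assoc, ← Pi.mulSingle_mul] at h3
  simpa using h3

theorem main_aux {G : Type u} [Group G] [Infinite G]
    (hfg : Group.FG G) (hrf : ResiduallyFinite G) (htors : Monoid.IsTorsion G) :
    ∃ (Γ : Type u) (_ : Group Γ) (φ : G →* Γ),
      Function.Injective φ ∧
      Group.FG Γ ∧
      commutator Γ = ⊤ ∧
      Infinite Γ ∧
      ResiduallyFinite Γ ∧
      Monoid.IsTorsion Γ := by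
  obtain ⟨S, hS, hSf⟩ := Group.fg_iff.1 hfg
  have hab : Finite (Abelianization G) := by
    have h1 : Group.FG (Abelianization G) :=
      Group.fg_of_surjective (f := Abelianization.of) (QuotientGroup.mk_surjective)
    apply CommGroup.finite_of_fg_isMulTorsion
    intro x
    obtain ⟨g, rfl⟩ := QuotientGroup.mk_surjective x
    exact MonoidHom.isOfFinOrder (Abelianization.of) (htors g)
  set n := 5 * Nat.card (Abelianization G) with hn
  have hn5 : 5 ≤ n := by
    have := Nat.card_pos (α := Abelianization G)
    omega
  have hpow : ∀ g : G, g ^ n ∈ commutator G := by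
    intro g
    rw [← Abelianization.ker_of, MonoidHom.mem_ker, map_pow, hn, mul_comm, pow_mul,
      pow_card_eq_one', one_pow]
  let φ : G →* Gam n S :=
    ((inl : _ →* W n G).comp (Pi.constMonoidHom (Fin n) G)).codRestrict (Gam n S)
      (fun g => Gam_diag hn5 S hS g (hpow g))
  have hφ : Function.Injective φ := by
    intro a b hab
    have h1 : (inl (fun _ => a) : W n G) = inl (fun _ => b) := congrArg Subtype.val hab
    exact congrFun (inl_injective h1) ⟨0, by omega⟩
  refine ⟨Gam n S, inferInstance, φ, hφ, ?_, ?_, Infinite.of_injective φ hφ, ?_, ?_⟩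
  · exact (Group.fg_iff_subgroup_fg _).2 (Gam_fg S hSf)
  · rw [eq_top_iff]
    intro x _
    have h1 := Gam_perfect hn5 S x.2
    have h2 : (commutator (Gam n S)).map (Gam n S).subtype = ⁅Gam n S, Gam n S⁆ := by
      rw [commutator_def, Subgroup.map_commutator]
      simp [← MonoidHom.range_eq_map]
    rw [← h2] at h1
    obtain ⟨y, hy, hyx⟩ := h1
    rwa [← Subtype.ext hyx]
  · apply rf_of_hom
    intro w hw
    obtain ⟨Q, i1, i2, f, hf⟩ := W_rf hrf w.1 (fun h => hw (Subtype.ext h))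
    exact ⟨Q, i1, i2, f.comp (Gam n S).subtype, hf⟩
  · exact (W_tors htors).subgroup _

end PerfEmb

namespace Grig

/-- The Klein four-group of directed letters: `0 = (ff,ff)`, `b = (tt,tt)`, `c = (tt,ff)`,
`d = (ff,tt)`. -/
abbrev V := Bool × Bool

def vadd (u v : V) : V := (xor u.1 v.1, xor u.2 v.2)

def sg (v : V) : V := (v.2, xor v.1 v.2)

def aB (e : Bool) : List Bool → List Bool
  | [] => []
  | x :: w => xor e x :: w

def vF : V → List Bool → List Bool
  | _, [] => []
  | v, false :: w => false :: aB v.1 w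
  | v, true :: w => true :: vF (sg v) w

theorem aB_add (e f : Bool) (w : List Bool) : aB e (aB f w) = aB (xor e f) w := by
  cases w <;> simp [aB]

theorem aB_zero (w : List Bool) : aB false w = w := by
  cases w <;> simp [aB]

theorem aB_len (e : Bool) (w : List Bool) : (aB e w).length = w.length := by
  cases w <;> simp [aB]

theorem sg_add (u v : V) : sg (vadd u v) = vadd (sg u) (sg v) := by
  revert u v
  decide

theorem vF_add (w : List Bool) : ∀ u v : V, vF u (vF v w) = vF (vadd u v) w := by
  induction w with
  | nil => intros; simp [vF]
  | cons x w ih =>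
    intro u v
    cases x
    · simp [vF, aB_add, vadd]
    · simp [vF, ih, sg_add]

theorem vF_zero (w : List Bool) : vF (false, false) w = w := by
  induction w with
  | nil => simp [vF]
  | cons x w ih =>
    cases x
    · simp [vF, aB_zero]
    · simp [vF, sg, ih]

theorem vF_len (w : List Bool) : ∀ v, (vF v w).length = w.length := by
  induction w with
  | nil => simp [vF]
  | cons x w ih =>
    intro v
    cases x
    · simp [vF, aB_len]
    · simp [vF, ih]

theorem vadd_self (v : V) : vadd v v = (false, false) := by
  simp [vadd]

def aP (e : Bool) : Equiv.Perm (List Bool) where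
  toFun := aB e
  invFun := aB e
  left_inv w := by simp [aB_add, aB_zero]
  right_inv w := by simp [aB_add, aB_zero]

def vP (v : V) : Equiv.Perm (List Bool) where
  toFun := vF v
  invFun := vF v
  left_inv w := by simp [vF_add, vadd_self, vF_zero]
  right_inv w := by simp [vF_add, vadd_self, vF_zero]

theorem aP_mul (e f : Bool) : aP e * aP f = aP (xor e f) := Equiv.ext fun w => aB_add e f w
theorem vP_mul (u v : V) : vP u * vP v = vP (vadd u v) := Equiv.ext fun w => vF_add w u v
theorem aP_zero : aP false = 1 := Equiv.ext aB_zero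
theorem vP_zero : vP (false, false) = 1 := Equiv.ext vF_zero

abbrev Let := Bool × V

def pP (p : Let) : Equiv.Perm (List Bool) := aP p.1 * vP p.2

def ev (L : List Let) : Equiv.Perm (List Bool) := (L.map pP).prod

theorem ev_nil : ev [] = 1 := rfl
theorem ev_cons (p : Let) (L : List Let) : ev (p :: L) = pP p * ev L := by simp [ev]
theorem ev_append (L M : List Let) : ev (L ++ M) = ev L * ev M := by simp [ev]

/-- The evaluation of a word has finite order. -/
def F (L : List Let) : Prop := IsOfFinOrder (ev L)

theorem F_comm {L M : List Let} (h : F (L ++ M)) : F (M ++ L) := by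
  unfold F at *
  rw [ev_append] at *
  refine IsConj.isOfFinOrder ?_ h
  exact isConj_iff.2 ⟨(ev L)⁻¹, by group⟩

theorem vadd_zero (v : V) : vadd v (false, false) = v := by simp [vadd]

def nonfull (L : List Let) : Prop := ∃ p ∈ L, p.1 = false ∨ p.2 = (false, false)

theorem F_nonfull (n : ℕ) (ih : ∀ m < n, ∀ L : List Let, L.length = m → F L)
    (L : List Let) (hL : L.length = n) (h : nonfull L) : F L := by
  obtain ⟨p, hp, h⟩ := h
  obtain ⟨L1, L2, rfl⟩ := List.append_of_mem hp
  apply F_comm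
  rw [List.cons_append]
  generalize hM : L2 ++ L1 = M
  have hlen : M.length + 1 = n := by
    rw [← hM, ← hL]
    simp
    omega
  obtain ⟨e, v⟩ := p
  rcases h with h | h
  · simp only at h
    subst h
    rcases List.eq_nil_or_concat M with rfl | ⟨M', q, rfl⟩
    · refine isOfFinOrder_iff_pow_eq_one.2 ⟨2, by norm_num, ?_⟩
      simp [ev, pP, aP_zero, pow_two, vP_mul, vadd_self, vP_zero]
    · rw [List.concat_eq_append] at hlen ⊢
      rw [← List.cons_append]
      apply F_comm
      have := ih (n - 1) (by omega) ((q.1, vadd q.2 v) :: M') (by simp at hlen ⊢; omega)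
      unfold F at *
      convert this using 1
      simp [ev_cons, pP, aP_zero, ← vP_mul, mul_assoc]
  · simp only at h
    subst h
    cases M with
    | nil =>
      refine isOfFinOrder_iff_pow_eq_one.2 ⟨2, by norm_num, ?_⟩
      simp [ev, pP, aP_zero, pow_two, aP_mul, vP_zero]
    | cons q M' =>
      have := ih (n - 1) (by omega) ((xor e q.1, q.2) :: M') (by simp at hlen ⊢; omega)
      unfold F at *
      convert this using 1
      simp [ev_cons, pP, vP_zero, ← aP_mul, mul_assoc]

def full (xs : List V) : List Let := xs.map fun x => (true, x)

def sec : List V → List Let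
  | x :: y :: r => (x.1, sg y) :: sec r
  | _ => []

theorem sec_len : ∀ xs : List V, (sec xs).length = xs.length / 2
  | [] => rfl
  | [_] => by simp [sec]
  | _ :: _ :: r => by
    simp only [sec, List.length_cons, sec_len r]
    omega

theorem pP_pair (x y : V) (w : List Bool) :
    pP (true, x) (pP (true, y) (true :: w)) = true :: pP (x.1, sg y) w := by
  change aB true (vF x (aB true (vF y (true :: w)))) = true :: aB x.1 (vF (sg y) w)
  simp [vF, aB]

theorem ev_sec : ∀ (xs : List V), Even xs.length → ∀ w : List Bool,
    ev (full xs) (true :: w) = true :: ev (sec xs) w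
  | [], _, w => rfl
  | [_], h, _ => by simp at h
  | x :: y :: r, h, w => by
    have h' : Even r.length := by
      simp only [List.length_cons] at h
      revert h
      simp [parity_simps]
    have := ev_sec r h' w
    simp only [full, List.map_cons, ev_cons, sec, Equiv.Perm.mul_apply] at this ⊢
    rw [this, pP_pair]

theorem ev_sec_pow (xs : List V) (h : Even xs.length) (k : ℕ) : ∀ w : List Bool,
    (ev (full xs) ^ k) (true :: w) = true :: (ev (sec xs) ^ k) w := by
  induction k with
  | zero => intro w; rfl
  | succ k ih =>
    intro w
    rw [pow_succ, pow_succ, Equiv.Perm.mul_apply, Equiv.Perm.mul_apply, ev_sec xs h, ih]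

theorem F_even (x : V) (r : List V) (h : Even (x :: r).length)
    (h1 : F (sec (x :: r))) (h2 : F (sec (r ++ [x]))) : F (full (x :: r)) := by
  obtain ⟨k, hk, hk1⟩ := isOfFinOrder_iff_pow_eq_one.1 h1
  obtain ⟨l, hl, hl1⟩ := isOfFinOrder_iff_pow_eq_one.1 h2
  have h' : Even (r ++ [x]).length := by simpa using h
  have e1 : ∀ w, (ev (full (x :: r)) ^ k) (true :: w) = true :: w := by
    intro w
    rw [ev_sec_pow _ h, hk1]
    rfl
  have e2 : ∀ w, (ev (full (r ++ [x])) ^ l) (true :: w) = true :: w := by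
    intro w
    rw [ev_sec_pow _ h', hl1]
    rfl
  have hc : ev (full (x :: r)) = pP (true, x) * ev (full (r ++ [x])) * (pP (true, x))⁻¹ := by
    simp only [full, List.map_append, List.map_cons, List.map_nil, ev_append, ev_cons, ev_nil]
    group
  have e3 : ∀ w, (ev (full (x :: r)) ^ l) (false :: w) = false :: w := by
    intro w
    have : pP (true, x) (true :: vF (sg x) w) = false :: w := by
      change aB true (vF x (true :: vF (sg x) w)) = _
      simp [vF, aB, vF_add, vadd_self, vF_zero]
    rw [hc, conj_pow, ← this]
    simp [e2]
  refine isOfFinOrder_iff_pow_eq_one.2 ⟨k * l, Nat.mul_pos hk hl, ?_⟩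
  have fixpow : ∀ (g : Equiv.Perm (List Bool)) (w : List Bool) (m : ℕ), g w = w →
      (g ^ m) w = w := by
    intro g w m hg
    exact Equiv.Perm.pow_apply_eq_self_of_apply_eq_self hg m
  have e0 : ∀ L : List Let, ev L [] = [] := by
    intro L
    induction L with
    | nil => rfl
    | cons p L ih =>
      rw [ev_cons, Equiv.Perm.mul_apply, ih]
      rfl
  ext1 w
  rw [Equiv.Perm.one_apply]
  match w with
  | [] => exact fixpow _ _ _ (e0 _)
  | true :: w =>
    rw [pow_mul]
    exact fixpow _ _ _ (e1 w)
  | false :: w =>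
    rw [mul_comm, pow_mul]
    exact fixpow _ _ _ (e3 w)

theorem sec_mem : ∀ (K : List V), Even K.length → ∀ (x y : V) (M : List V),
    (x.1, sg y) ∈ sec (K ++ x :: y :: M)
  | [], _, x, y, M => by simp [sec]
  | [_], h, _, _, _ => by simp at h
  | u :: v :: r, h, x, y, M => by
    have h' : Even r.length := by
      simp only [List.length_cons] at h
      revert h
      simp [parity_simps]
    have := sec_mem r h' x y M
    simp only [List.cons_append, sec, List.mem_cons]
    exact Or.inr this

theorem sec_double (xs : List V) (h : Odd xs.length) (x : V) (hx : x ∈ xs) :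
    (∃ p ∈ sec (xs ++ xs), p.1 = x.1) ∧ (∃ p ∈ sec (xs ++ xs), p.2 = sg x) := by
  obtain ⟨L1, L2, hxs⟩ := List.append_of_mem hx
  have hlen : xs.length = L1.length + L2.length + 1 := by
    rw [hxs]
    simp
    omega
  -- a letter followed by something, after an even prefix
  have A : ∀ K M : List V, Even K.length → M ≠ [] → xs ++ xs = K ++ x :: M →
      ∃ p ∈ sec (xs ++ xs), p.1 = x.1 := by
    intro K M hK hM he
    obtain ⟨y, M, rfl⟩ := List.exists_cons_of_ne_nil hM
    exact ⟨_, he ▸ sec_mem K hK x y M, rfl⟩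
  have B : ∀ K M : List V, Odd K.length → xs ++ xs = K ++ x :: M →
      ∃ p ∈ sec (xs ++ xs), p.2 = sg x := by
    intro K M hK he
    rcases List.eq_nil_or_concat K with rfl | ⟨K, y, rfl⟩
    · simp at hK
    · rw [List.concat_eq_append] at hK he
      refine ⟨(y.1, sg x), ?_, rfl⟩
      rw [he, List.append_assoc]
      refine sec_mem K ?_ y x M
      simp only [List.length_append, List.length_singleton] at hK
      revert hK
      simp [parity_simps]
  have s1 : xs ++ xs = L1 ++ x :: (L2 ++ xs) := by
    conv_lhs => enter [1]; rw [hxs]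
    simp
  have s2 : xs ++ xs = (xs ++ L1) ++ x :: L2 := by
    conv_lhs => enter [2]; rw [hxs]
    simp
  have hne : xs ≠ [] := List.ne_nil_of_mem hx
  rcases Nat.even_or_odd L1.length with he | ho
  · refine ⟨A _ _ he (by simp [hne]) s1, B _ _ ?_ s2⟩
    rw [List.length_append]
    exact h.add_even he
  · refine ⟨A _ _ ?_ ?_ s2, B _ _ ho s1⟩
    · rw [List.length_append]
      exact h.add_odd ho
    · rintro rfl
      rw [hlen] at h
      obtain ⟨a, ha⟩ := h
      obtain ⟨b, hb⟩ := ho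
      simp at ha
      omega

theorem eq_full (L : List Let) (h : ¬ nonfull L) : L = full (L.map Prod.snd) := by
  unfold full
  rw [List.map_map]
  symm
  conv_rhs => rw [← List.map_id L]
  apply List.map_congr_left
  intro p hp
  have : p.1 = true := by
    by_contra hc
    exact h ⟨p, hp, Or.inl (by simpa using hc)⟩
  exact Prod.ext this.symm rfl

theorem odd_step (n : ℕ) (hn : Odd n)
    (ihn : ∀ L : List Let, L.length = n → nonfull L → F L) (x : V)
    (ih : ∀ L : List Let, L.length = n → (∃ p ∈ L, p.1 = x.1) → (∃ p ∈ L, p.2 = sg x) → F L)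
    (L : List Let) (hL : L.length = n) (hx : ∃ p ∈ L, p.2 = x) : F L := by
  by_cases hf : nonfull L
  · exact ihn L hL hf
  have hLf := eq_full L hf
  generalize hxs : L.map Prod.snd = xs at hLf
  have hlen : xs.length = n := by rw [← hxs, List.length_map, hL]
  have hxm : x ∈ xs := by
    obtain ⟨p, hp, rfl⟩ := hx
    rw [← hxs]
    exact List.mem_map_of_mem hp
  have key : ∀ ys : List V, ys.length = n → x ∈ ys → F (sec (ys ++ ys)) := by
    intro ys hy hxy
    obtain ⟨h1, h2⟩ := sec_double ys (hy ▸ hn) x hxy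
    refine ih _ ?_ h1 h2
    rw [sec_len, List.length_append]
    omega
  obtain ⟨y, r, rfl⟩ := List.exists_cons_of_ne_nil (List.ne_nil_of_mem hxm)
  have h1 := key _ hlen hxm
  have h2 := key (r ++ [y]) (by simpa using hlen) (by
    simp only [List.mem_append, List.mem_cons, List.not_mem_nil, or_false] at hxm ⊢
    tauto)
  have h3 : F (full ((y :: r) ++ (y :: r))) := by
    rw [List.cons_append]
    refine F_even y _ ?_ h1 ?_
    · simp only [List.length_cons, List.length_append]
      exact ⟨r.length + 1, by omega⟩
    · simpa using h2
  have h4 : ev (full ((y :: r) ++ (y :: r))) = ev L ^ 2 := by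
    rw [hLf, pow_two, ← ev_append]
    simp [full]
  unfold F at h3 ⊢
  rw [h4] at h3
  exact (isOfFinOrder_pow.1 h3).resolve_right (by norm_num)

theorem F_all (n : ℕ) : ∀ L : List Let, L.length = n → F L := by
  induction n using Nat.strong_induction_on with
  | _ n ih =>
  have hi := F_nonfull n ih
  rcases Nat.even_or_odd n with he | ho
  · intro L hL
    by_cases hf : nonfull L
    · exact hi L hL hf
    have hLf := eq_full L hf
    generalize hxs : L.map Prod.snd = xs at hLf
    have hlen : xs.length = n := by rw [← hxs, List.length_map, hL]
    rw [hLf]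
    cases xs with
    | nil => exact IsOfFinOrder.one
    | cons y r =>
      have hr : r.length + 1 = n := by simpa using hlen
      exact F_even y r (hlen ▸ he) (ih (n / 2) (by omega) _ (by rw [sec_len, hlen]))
        (ih (n / 2) (by omega) _ (by simp [sec_len, hr]))
  · have hd := odd_step n ho hi (false, true) (fun L hL ⟨p, hp, h⟩ _ =>
      hi L hL ⟨p, hp, Or.inl h⟩)
    have hc := odd_step n ho hi (true, false) (fun L hL _ h => hd L hL h)
    have hb := odd_step n ho hi (true, true) (fun L hL _ h => hc L hL h)
    intro L hL
    cases L with
    | nil => exact IsOfFinOrder.one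
    | cons p L =>
      have hp : p ∈ p :: L := List.mem_cons_self
      rcases hq : p.2 with ⟨_ | _, _ | _⟩
      · exact hi _ hL ⟨p, hp, Or.inr hq⟩
      · exact hd _ hL ⟨p, hp, hq⟩
      · exact hc _ hL ⟨p, hp, hq⟩
      · exact hb _ hL ⟨p, hp, hq⟩

/-- The first Grigorchuk group. -/
def Gr : Subgroup (Equiv.Perm (List Bool)) := Subgroup.closure (Set.range pP)

theorem Gr_fg : Group.FG Gr := by
  rw [Group.fg_iff_subgroup_fg, Subgroup.fg_iff]
  exact ⟨_, rfl, Set.finite_range _⟩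

theorem Gr_ev (g : Equiv.Perm (List Bool)) (hg : g ∈ Gr) : ∃ L, g = ev L := by
  induction hg using Subgroup.closure_induction with
  | mem g h =>
    obtain ⟨p, rfl⟩ := h
    exact ⟨[p], by simp [ev]⟩
  | one => exact ⟨[], rfl⟩
  | mul g h _ _ ig ih =>
    obtain ⟨L, rfl⟩ := ig
    obtain ⟨M, rfl⟩ := ih
    exact ⟨L ++ M, (ev_append L M).symm⟩
  | inv g hg' ig =>
    obtain ⟨L, rfl⟩ := ig
    clear hg'
    induction L with
    | nil => exact ⟨[], by simp [ev]⟩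
    | cons p L ih =>
      obtain ⟨M, hM⟩ := ih
      refine ⟨M ++ [(false, p.2), (p.1, (false, false))], ?_⟩
      rw [ev_cons, mul_inv_rev, hM, ev_append]
      congr 1
      rw [inv_eq_iff_mul_eq_one]
      simp only [ev_cons, ev_nil, pP, aP_zero, vP_zero, one_mul, mul_one]
      rw [mul_assoc, ← mul_assoc (vP p.2), vP_mul, vadd_self, vP_zero, one_mul, aP_mul]
      simp [aP_zero]

theorem Gr_tors (g : Gr) : IsOfFinOrder g := by
  obtain ⟨L, hL⟩ := Gr_ev g.1 g.2
  have := F_all _ L rfl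
  unfold F at this
  rw [← hL] at this
  exact Submonoid.isOfFinOrder_coe.1 this

theorem Gr_len (g : Equiv.Perm (List Bool)) (hg : g ∈ Gr) (w : List Bool) :
    (g w).length = w.length := by
  obtain ⟨L, rfl⟩ := Gr_ev g hg
  induction L with
  | nil => rfl
  | cons p L ih =>
    have := ih (by
      have h1 : pP p ∈ Gr := Subgroup.subset_closure ⟨p, rfl⟩
      rw [ev_cons] at hg
      exact (Subgroup.mul_mem_cancel_left _ h1).1 hg)
    rw [ev_cons, Equiv.Perm.mul_apply]
    change (aB p.1 (vF p.2 _)).length = _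
    rw [aB_len, vF_len, this]

/-- The action on words of a given length. -/
def lev (n : ℕ) : Gr →* Equiv.Perm {w : List Bool // w.length = n} where
  toFun g := g.1.subtypePerm fun w => by rw [Gr_len g.1 g.2]
  map_one' := rfl
  map_mul' _ _ := rfl

theorem Gr_rf : ResiduallyFinite Gr := by
  apply PerfEmb.rf_of_hom
  intro g hg
  have : ∃ w, g.1 w ≠ w := by
    by_contra! hc
    exact hg (Subtype.ext (Equiv.ext hc))
  obtain ⟨w, hw⟩ := this
  have hfin : Finite {v : List Bool // v.length = w.length} :=
    (inferInstance : Finite (List.Vector Bool w.length))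
  refine ⟨_, inferInstance, inferInstance, lev w.length, fun h => hw ?_⟩
  exact congrArg Subtype.val (Equiv.congr_fun h ⟨w, rfl⟩)

theorem Gr_lift (g : Equiv.Perm (List Bool)) (hg : g ∈ Gr) :
    ∃ h ∈ Gr, ∀ w, h (true :: w) = true :: g w := by
  have hp : ∀ p, pP p ∈ Gr := fun p => Subgroup.subset_closure ⟨p, rfl⟩
  induction hg using Subgroup.closure_induction with
  | mem g h =>
    obtain ⟨p, rfl⟩ := h
    have : ∃ x y : V, (x.1, sg y) = p := by
      revert p
      decide
    obtain ⟨x, y, rfl⟩ := this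
    exact ⟨_, mul_mem (hp (true, x)) (hp (true, y)), fun w => pP_pair x y w⟩
  | one => exact ⟨1, one_mem _, fun _ => rfl⟩
  | mul g h _ _ ig ih =>
    obtain ⟨g', hg, hg'⟩ := ig
    obtain ⟨h', hh, hh'⟩ := ih
    exact ⟨_, mul_mem hg hh, fun w => by simp [hg', hh']⟩
  | inv g _ ig =>
    obtain ⟨g', hg, hg'⟩ := ig
    exact ⟨_, inv_mem hg, fun w => by rw [Equiv.Perm.inv_eq_iff_eq, hg']; simp⟩

theorem Gr_trans (w : List Bool) : ∃ g ∈ Gr, g (List.replicate w.length true) = w := by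
  induction w with
  | nil => exact ⟨1, one_mem _, rfl⟩
  | cons x w ih =>
    obtain ⟨g, hg, hgw⟩ := ih
    obtain ⟨h, hh, hw⟩ := Gr_lift g hg
    refine ⟨pP (!x, (false, false)) * h, mul_mem (Subgroup.subset_closure ⟨_, rfl⟩) hh, ?_⟩
    rw [List.length_cons, List.replicate_succ, Equiv.Perm.mul_apply, hw, hgw]
    change aB (!x) (vF (false, false) (true :: w)) = _
    rw [vF_zero]
    simp [aB]

theorem Gr_inf : Infinite Gr := by
  by_contra hc
  have hfin : Finite Gr := not_infinite_iff_finite.1 hc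
  let N := Nat.card Gr
  let f : Gr → List.Vector Bool N := fun g =>
    ⟨g.1 (List.replicate N true), by rw [Gr_len g.1 g.2]; simp⟩
  have hf : Function.Surjective f := by
    rintro ⟨w, hw⟩
    obtain ⟨g, hg, hgw⟩ := Gr_trans w
    refine ⟨⟨g, hg⟩, Subtype.ext ?_⟩
    rw [hw] at hgw
    exact hgw
  have h1 := Nat.card_le_card_of_surjective f hf
  have h2 : Nat.card (List.Vector Bool N) = 2 ^ N := by
    rw [Nat.card_eq_fintype_card, card_vector, Fintype.card_bool]
  rw [h2] at h1
  exact absurd h1 (not_le.2 (Nat.lt_two_pow_self))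

end Grig

theorem prod_fg_aux {G K : Type*} [Group G] [Group K] (hG : Group.FG G) (hK : Group.FG K) :
    Group.FG (G × K) := by
  obtain ⟨S, hS, hSf⟩ := Group.fg_iff.1 hG
  obtain ⟨T, hT, hTf⟩ := Group.fg_iff.1 hK
  refine Group.fg_iff.2 ⟨Set.image (MonoidHom.inl G K) S ∪ Set.image (MonoidHom.inr G K) T, ?_,
    (hSf.image _).union (hTf.image _)⟩
  rw [Subgroup.closure_union, ← MonoidHom.map_closure, ← MonoidHom.map_closure, hS, hT,
    eq_top_iff]
  rintro ⟨g, k⟩ -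
  have : ((g, k) : G × K) = MonoidHom.inl G K g * MonoidHom.inr G K k := by simp
  rw [this]
  exact mul_mem (Subgroup.mem_sup_left ⟨g, trivial, rfl⟩)
    (Subgroup.mem_sup_right ⟨k, trivial, rfl⟩)

theorem prod_rf_aux {G K : Type*} [Group G] [Group K] (hG : ResiduallyFinite G)
    (hK : ResiduallyFinite K) : ResiduallyFinite (G × K) := by
  rintro ⟨g, k⟩ h
  by_cases hg : g = 1
  · have hk : k ≠ 1 := by
      rintro rfl
      exact h (by rw [hg]; rfl)
    obtain ⟨N, h1, h2, h3⟩ := hK k hk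
    exact ⟨N.comap (MonoidHom.snd G K), inferInstance, ⟨by
      rw [Subgroup.index_comap_of_surjective _ Prod.snd_surjective]
      exact h2.index_ne_zero⟩, h3⟩
  · obtain ⟨N, h1, h2, h3⟩ := hG g hg
    exact ⟨N.comap (MonoidHom.fst G K), inferInstance, ⟨by
      rw [Subgroup.index_comap_of_surjective _ Prod.fst_surjective]
      exact h2.index_ne_zero⟩, h3⟩

/-- Every finitely generated, residually finite torsion group embeds into a finitely
generated, perfect, infinite, residually finite torsion group. -/
theorem embeds_into_fg_perfect_torsion_group {G : Type u} [Group G]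
    (hfg : Group.FG G) (hrf : ResiduallyFinite G) (htors : Monoid.IsTorsion G) :
    ∃ (Γ : Type u) (_ : Group Γ) (φ : G →* Γ),
      Function.Injective φ ∧
      Group.FG Γ ∧
      commutator Γ = ⊤ ∧
      Infinite Γ ∧
      ResiduallyFinite Γ ∧
      Monoid.IsTorsion Γ := by
  have hinf : Infinite Grig.Gr := Grig.Gr_inf
  have ht : Monoid.IsTorsion (G × Grig.Gr) := by
    rintro ⟨g, k⟩
    obtain ⟨a, ha, ha1⟩ := isOfFinOrder_iff_pow_eq_one.1 (htors g)
    obtain ⟨b, hb, hb1⟩ := isOfFinOrder_iff_pow_eq_one.1 (Grig.Gr_tors k)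
    refine isOfFinOrder_iff_pow_eq_one.2 ⟨a * b, Nat.mul_pos ha hb, Prod.ext ?_ ?_⟩
    · change g ^ (a * b) = 1
      rw [pow_mul, ha1, one_pow]
    · change k ^ (a * b) = 1
      rw [mul_comm, pow_mul, hb1, one_pow]
  obtain ⟨Γ, i, φ, h1, h2⟩ := PerfEmb.main_aux (G := G × Grig.Gr)
    (prod_fg_aux hfg Grig.Gr_fg) (prod_rf_aux hrf Grig.Gr_rf) ht
  refine ⟨Γ, i, φ.comp (MonoidHom.inl G Grig.Gr), ?_, h2⟩
  intro a b hab
  exact congrArg Prod.fst (h1 hab)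
end

section
/- Let P be a property of groups that is invariant under group isomorphism, closed under passing to subgroups, and closed under direct products of two groups. If G is a finitely generated, residually finite group that is locally P up to powers, then G embeds into a finitely generated, perfect, infinite group Γ (i.e., there is an injective group homomorphism G → Γ) that is locally P up to powers. (Theorem 3.4 of the paper, stated without the branch-group conclusion.) -/
/-- A group `Γ` is locally `P` up to powers if for every finite list of elements
`γ₁, …, γ_k ∈ Γ` there are positive integers `t₁, …, t_k` such that the subgroup
`⟨γ₁^{t₁}, …, γ_k^{t_k}⟩` satisfies `P`. -/
def LocallyUpToPowers (P : (H : Type u) → [inst : Group H] → Prop)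
    (Γ : Type u) [Group Γ] : Prop :=
  ∀ (k : ℕ) (γ : Fin k → Γ), ∃ t : Fin k → ℕ, (∀ i, 0 < t i) ∧
    P (Subgroup.closure (Set.range fun i => γ i ^ t i))


namespace GS

abbrev T := List (ZMod 3)

def nodeFun (h : ZMod 3 → Equiv.Perm T) : T → T
  | [] => []
  | x :: w => x :: h x w

/-- Act on the subtree below `x` by `h x`. -/
def node : (ZMod 3 → Equiv.Perm T) →* Equiv.Perm T where
  toFun h := ⟨nodeFun h, nodeFun h⁻¹, by rintro (_ | _) <;> simp [nodeFun],
    by rintro (_ | _) <;> simp [nodeFun]⟩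
  map_one' := by ext1 w; cases w <;> simp [nodeFun]
  map_mul' f g := by ext1 w; cases w <;> simp [nodeFun]

theorem node_nil (h : ZMod 3 → Equiv.Perm T) : node h [] = [] := rfl
theorem node_cons (h : ZMod 3 → Equiv.Perm T) (x : ZMod 3) (w : T) :
    node h (x :: w) = x :: h x w := rfl

theorem node_inj : Function.Injective node := by
  intro f g hfg
  funext x
  ext1 w
  have := congrArg (fun e => e (x :: w)) hfg
  simpa [node_cons] using this

def rFun (k : ZMod 3) : T → T
  | [] => []
  | x :: w => (x + k) :: w

/-- Rooted rotation. -/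
def R (k : ZMod 3) : Equiv.Perm T :=
  ⟨rFun k, rFun (-k), by rintro (_ | _) <;> simp [rFun], by rintro (_ | _) <;> simp [rFun]⟩

theorem R_nil (k : ZMod 3) : R k [] = [] := rfl
theorem R_cons (k x : ZMod 3) (w : T) : R k (x :: w) = (x + k) :: w := rfl

theorem R_zero : R 0 = 1 := by
  ext1 w; cases w <;> simp [R_nil, R_cons]

theorem R_add (k l : ZMod 3) : R (k + l) = R k * R l := by
  ext1 w; cases w <;> simp [R_nil, R_cons]; ring

theorem R_inv (k : ZMod 3) : (R k)⁻¹ = R (-k) := by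
  rw [inv_eq_iff_mul_eq_one, ← R_add, add_neg_cancel, R_zero]

def dFun (e : ZMod 3) : T → T
  | [] => []
  | x :: w => x :: (if x = 0 then dFun e w else R (x * e) w)

theorem dFun_add (e f : ZMod 3) (w : T) : dFun (e + f) w = dFun e (dFun f w) := by
  induction w with
  | nil => rfl
  | cons x w ih =>
    by_cases hx : x = 0
    · simp [dFun, hx, ih]
    · simp [dFun, hx, mul_add, R_add]

theorem dFun_zero (w : T) : dFun 0 w = w := by
  induction w with
  | nil => rfl
  | cons x w ih =>
    by_cases hx : x = 0
    · simp [dFun, hx, ih]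
    · simp [dFun, hx, R_zero]

/-- Directed automorphism. -/
def D (e : ZMod 3) : Equiv.Perm T :=
  ⟨dFun e, dFun (-e), fun w => by rw [← dFun_add, neg_add_cancel, dFun_zero],
    fun w => by rw [← dFun_add, add_neg_cancel, dFun_zero]⟩

theorem D_add (e f : ZMod 3) : D (e + f) = D e * D f := by
  ext1 w; exact dFun_add e f w

theorem D_zero : D 0 = 1 := by
  ext1 w; exact dFun_zero w

theorem D_inv (k : ZMod 3) : (D k)⁻¹ = D (-k) := by
  rw [inv_eq_iff_mul_eq_one, ← D_add, add_neg_cancel, D_zero]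

/-- sections of the conjugate of `D e` by `R i`. -/
def sec (i e : ZMod 3) : ZMod 3 → Equiv.Perm T :=
  fun x => if x = i then D e else R ((x - i) * e)

def dd (i e : ZMod 3) : Equiv.Perm T := R i * D e * R (-i)

theorem dd_eq (i e : ZMod 3) : dd i e = node (sec i e) := by
  ext1 w
  cases w with
  | nil => rfl
  | cons x w =>
    show R i (D e (R (-i) (x :: w))) = _
    rw [R_cons, node_cons]
    show R i (dFun e _) = _
    rw [dFun, R_cons, sec]
    by_cases hx : x = i
    · subst hx; simp; rfl
    · have : x + -i ≠ 0 := by rwa [← sub_eq_add_neg, sub_ne_zero]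
      simp [hx, this, sub_eq_add_neg]

theorem R_mul_dd (k i e : ZMod 3) : R k * dd i e = dd (i + k) e * R k := by
  have h : R (-(i+k)) * R k = R (-i) := by rw [← R_add]; congr 1; ring
  simp only [dd]
  rw [mul_assoc (_ * _) _ (R k), h, add_comm i k, R_add]
  simp only [mul_assoc]

theorem dd_add (i e f : ZMod 3) : dd i (e + f) = dd i e * dd i f := by
  simp only [dd, D_add, ← R_inv]; group

theorem dd_zero (i : ZMod 3) : dd i 0 = 1 := by
  simp only [dd, D_zero, ← R_inv]; group

theorem dd_inv (i e : ZMod 3) : (dd i e)⁻¹ = dd i (-e) := by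
  rw [inv_eq_iff_mul_eq_one, ← dd_add, add_neg_cancel, dd_zero]

theorem dd_fin (i e : ZMod 3) : IsOfFinOrder (dd i e) := by
  rw [isOfFinOrder_iff_pow_eq_one]
  refine ⟨3, by norm_num, ?_⟩
  rw [pow_succ, pow_succ, pow_one, ← dd_add, ← dd_add, ← dd_zero i]
  congr 1
  revert e; decide

def ev (w : List (ZMod 3 × ZMod 3)) : Equiv.Perm T := (w.map fun p => dd p.1 p.2).prod

theorem ev_cons (p : ZMod 3 × ZMod 3) (w) : ev (p :: w) = dd p.1 p.2 * ev w := by simp [ev]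
theorem ev_nil : ev [] = 1 := rfl
theorem ev_append (v w) : ev (v ++ w) = ev v * ev w := by simp [ev]

def S (n : ℕ) (k : ZMod 3) (g : Equiv.Perm T) : Prop :=
  ∃ w, w.length ≤ n ∧ g = ev w * R k

theorem R_mul_ev (k : ZMod 3) (w) :
    R k * ev w = ev (w.map fun p => (p.1 + k, p.2)) * R k := by
  induction w with
  | nil => simp [ev_nil]
  | cons p w ih =>
    rw [List.map_cons, ev_cons, ev_cons, ← mul_assoc, R_mul_dd, mul_assoc, ih, mul_assoc]

theorem S_mul {n m k l g h} (hg : S n k g) (hh : S m l h) : S (n + m) (k + l) (g * h) := by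
  obtain ⟨v, hv, rfl⟩ := hg
  obtain ⟨w, hw, rfl⟩ := hh
  refine ⟨v ++ w.map fun p => (p.1 + k, p.2), by simp; omega, ?_⟩
  rw [ev_append, R_add, mul_assoc, ← mul_assoc (R k), R_mul_ev]
  simp only [mul_assoc]

theorem S_R (k) : S 0 k (R k) := ⟨[], by simp, by simp [ev_nil]⟩

theorem S_dd (i e) : S 1 0 (dd i e) := ⟨[(i, e)], by simp, by simp [ev, R_zero]⟩

theorem S_D (e) : S 1 0 (D e) := by
  have := S_dd 0 e
  simpa [dd, R_zero] using this

theorem S_inv {n k g} (hg : S n k g) : S n (-k) g⁻¹ := by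
  obtain ⟨w, hw, rfl⟩ := hg
  have key : ∀ w, S w.length 0 (ev w)⁻¹ := by
    intro w
    induction w with
    | nil => simpa [ev_nil, R_zero] using S_R 0
    | cons p w ih =>
      rw [ev_cons, mul_inv_rev, dd_inv]
      simpa using S_mul ih (S_dd p.1 (-p.2))
  have := S_mul (S_R (-k)) (key w)
  rw [mul_inv_rev, R_inv]
  obtain ⟨v, hv, h⟩ := this
  exact ⟨v, by omega, by simpa using h⟩

theorem S_mono {n m k g} (hg : S n k g) (h : n ≤ m) : S m k g := by
  obtain ⟨w, hw, e⟩ := hg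
  exact ⟨w, hw.trans h, e⟩

theorem sections (w : List (ZMod 3 × ZMod 3)) :
    ∃ (h : ZMod 3 → Equiv.Perm T) (c : ZMod 3 → ZMod 3), ev w = node h ∧
      (∀ x, S (w.countP fun p => p.1 = x) (c x) (h x)) ∧ c 0 + c 1 + c 2 = 0 := by
  induction w with
  | nil =>
    refine ⟨1, 0, by simp [ev_nil], fun x => ?_, by simp⟩
    simpa [R_zero] using S_R 0
  | cons p w ih =>
    obtain ⟨h, c, e, hS, hc⟩ := ih
    obtain ⟨i, ε⟩ := p
    refine ⟨sec i ε * h, fun x => (x - i) * ε + c x, by rw [ev_cons, map_mul, e, dd_eq],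
      fun x => ?_, ?_⟩
    · rw [List.countP_cons, Pi.mul_apply, sec, add_comm (List.countP _ _)]
      refine S_mul ?_ (hS x)
      by_cases hx : x = i
      · subst hx; simpa using S_D ε
      · simpa [hx, Ne.symm hx] using S_R _
    · have : ∀ i ε : ZMod 3, (0 - i) * ε + (1 - i) * ε + (2 - i) * ε = 0 := by decide
      linear_combination hc + this i ε

theorem ev_const (i : ZMod 3) (w : List (ZMod 3 × ZMod 3)) (hw : ∀ p ∈ w, p.1 = i) :
    ∃ e, ev w = dd i e := by
  induction w with
  | nil => exact ⟨0, by rw [dd_zero, ev_nil]⟩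
  | cons p w ih =>
    obtain ⟨e, he⟩ := ih fun p hp => hw p (List.mem_cons_of_mem _ hp)
    refine ⟨p.2 + e, ?_⟩
    rw [ev_cons, he, dd_add, hw p List.mem_cons_self]

theorem node_fin (h : ZMod 3 → Equiv.Perm T) (hh : ∀ x, IsOfFinOrder (h x)) :
    IsOfFinOrder (node h) := by
  apply MonoidHom.isOfFinOrder
  simp only [isOfFinOrder_iff_pow_eq_one] at hh ⊢
  choose n hn e using hh
  refine ⟨∏ x, n x, Finset.prod_pos fun x _ => hn x, ?_⟩
  funext x
  obtain ⟨m, hm⟩ := Finset.dvd_prod_of_mem n (Finset.mem_univ x)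
  rw [Pi.pow_apply, hm, pow_mul, e, one_pow, Pi.one_apply]

theorem R_mul_node (k : ZMod 3) (h) : R k * node h = node (fun x => h (x - k)) * R k := by
  ext1 w
  cases w <;> simp [R_nil, R_cons, node_nil, node_cons]

theorem S_fin (n : ℕ) : ∀ k g, S n k g → IsOfFinOrder g := by
  induction n using Nat.strong_induction_on with
  | _ n ih =>
    have h0 : ∀ g, S n 0 g → IsOfFinOrder g := by
      rintro g ⟨w, hw, rfl⟩
      rw [R_zero, mul_one]
      by_cases hc : ∃ i, ∀ p ∈ w, p.1 = i
      · obtain ⟨i, hi⟩ := hc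
        obtain ⟨e, he⟩ := ev_const i w hi
        rw [he]; exact dd_fin i e
      · obtain ⟨h, c, e, hS, -⟩ := sections w
        rw [e]
        refine node_fin h fun x => ih _ ?_ _ _ (hS x)
        refine lt_of_lt_of_le ?_ hw
        refine lt_of_le_of_ne List.countP_le_length fun h => hc ⟨x, ?_⟩
        simpa using List.countP_eq_length.1 h
    intro k g hg
    by_cases hk : k = 0
    · subst hk; exact h0 g hg
    obtain ⟨w, hw, rfl⟩ := hg
    obtain ⟨h, c, e, hS, hc⟩ := sections w
    rw [e]
    have e3 : (node h * R k) ^ 3 = node (fun x => h x * h (x - k) * h (x - k - k)) := by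
      have h3 : k + (k + k) = 0 := by revert k; decide
      have : (node h * R k) ^ 3 = node h * (R k * node h) * (R k * node h) * R k := by
        simp only [pow_succ, pow_zero, one_mul, mul_assoc]
      rw [this, R_mul_node]
      have : node h * (node (fun x => h (x - k)) * R k) * (node (fun x => h (x - k)) * R k) * R k
        = node h * node (fun x => h (x - k)) * (R k * node (fun x => h (x - k))) * (R k * R k) := by
        simp only [mul_assoc]
      rw [this, R_mul_node, ← R_add, mul_assoc, mul_assoc (node _) (R k), ← R_add, h3, R_zero,
        mul_one, ← map_mul, ← map_mul]
      rfl
    have hn : IsOfFinOrder ((node h * R k) ^ 3) := by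
      rw [e3]
      refine node_fin _ fun x => h0 _ ?_
      have := S_mul (S_mul (hS x) (hS (x - k))) (hS (x - k - k))
      have e1 : c x + c (x - k) + c (x - k - k) = 0 := by
        rw [← hc]
        clear this e3 hS
        have : ∀ k : ZMod 3, k ≠ 0 → ∀ x : ZMod 3, (x = 0 ∨ x = 1 ∨ x = 2) ∧ (k = 1 ∨ k = 2) := by
          decide
        obtain ⟨rfl | rfl | rfl, rfl | rfl⟩ := this k hk x <;>
        · try rw [show (0 - 1 : ZMod 3) = 2 by decide]
          try rw [show (0 - 2 : ZMod 3) = 1 by decide]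
          try rw [show (1 - 2 : ZMod 3) = 2 by decide]
          try rw [show (2 - 1 : ZMod 3) = 1 by decide]
          try rw [show (1 - 1 : ZMod 3) = 0 by decide]
          try rw [show (2 - 2 : ZMod 3) = 0 by decide]
          try rw [show (0 - 1 : ZMod 3) = 2 by decide]
          try rw [show (0 - 2 : ZMod 3) = 1 by decide]
          try ring
      rw [e1] at this
      refine S_mono this (le_trans ?_ hw)
      clear this e e3 hS hw
      induction w with
      | nil => simp
      | cons p w ih =>
        simp only [List.countP_cons, List.length_cons]
        have : ∀ k : ZMod 3, k ≠ 0 → ∀ x y : ZMod 3, (if decide (y = x) = true then 1 else 0)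
          + (if decide (y = x - k) = true then 1 else 0)
          + (if decide (y = x - k - k) = true then 1 else 0) ≤ 1 := by decide
        have := this k hk x p.1
        omega
    exact hn.of_pow (by norm_num)

/-- The Gupta-Sidki group. -/
def Γ : Subgroup (Equiv.Perm T) := Subgroup.closure (Set.range R ∪ Set.range D)

theorem Γ_fg : Group.FG Γ := by
  rw [Group.fg_iff_subgroup_fg, Subgroup.fg_iff]
  exact ⟨_, rfl, (Set.finite_range _).union (Set.finite_range _)⟩

theorem Γ_tors (g : Γ) : IsOfFinOrder g := by
  rw [← Submonoid.isOfFinOrder_coe]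
  obtain ⟨g, hg⟩ := g
  suffices h : ∃ n k, S n k g by
    obtain ⟨n, k, h⟩ := h
    exact S_fin n k g h
  induction hg using Subgroup.closure_induction with
  | mem x hx =>
    obtain ⟨k, rfl⟩ | ⟨k, rfl⟩ := hx
    · exact ⟨_, _, S_R k⟩
    · exact ⟨_, _, S_D k⟩
  | one => exact ⟨_, _, by simpa [R_zero] using S_R 0⟩
  | mul x y _ _ hx hy =>
    obtain ⟨_, _, hx⟩ := hx
    obtain ⟨_, _, hy⟩ := hy
    exact ⟨_, _, S_mul hx hy⟩
  | inv x _ hx =>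
    obtain ⟨_, _, hx⟩ := hx
    exact ⟨_, _, S_inv hx⟩

theorem R_mem (k) : R k ∈ Γ := Subgroup.subset_closure (Or.inl ⟨k, rfl⟩)
theorem D_mem (k) : D k ∈ Γ := Subgroup.subset_closure (Or.inr ⟨k, rfl⟩)
theorem dd_mem (i e) : dd i e ∈ Γ := Γ.mul_mem (Γ.mul_mem (R_mem _) (D_mem _)) (R_mem _)

theorem Γ_inf : Infinite Γ := by
  by_contra hfin
  rw [not_infinite_iff_finite] at hfin
  have hs : ∀ g ∈ Γ, ∃ h, node h ∈ Γ ∧ h 0 = g := by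
    intro g hg
    have : Γ ≤ (Γ.comap node).map (Pi.evalMonoidHom _ 0) := by
      rw [Γ, Subgroup.closure_le]
      rintro _ (⟨k, rfl⟩ | ⟨k, rfl⟩)
      · refine ⟨sec 1 (-k), ?_, by simp [sec]⟩
        show node _ ∈ Γ
        rw [← dd_eq]; exact dd_mem _ _
      · refine ⟨sec 0 k, ?_, by simp [sec]⟩
        show node _ ∈ Γ
        rw [← dd_eq]; exact dd_mem _ _
    exact this hg
  choose! f hf1 hf2 using hs
  let F : Γ → Γ := fun g => ⟨node (f g), hf1 g g.2⟩
  have hF : Function.Injective F := by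
    intro g g' h
    have : node (f g) = node (f g') := congrArg Subtype.val h
    ext1
    rw [← hf2 g g.2, ← hf2 g' g'.2, node_inj this]
  obtain ⟨g, hg⟩ := (Finite.injective_iff_surjective.1 hF) ⟨R 1, R_mem 1⟩
  have h1 : node (f g) = R 1 := congrArg Subtype.val hg
  have := congrArg (fun e => e [0]) h1
  simp [node_cons, R_cons] at this

end GS

namespace LUP

section
variable {P : (H : Type u) → [inst : Group H] → Prop}

theorem of_le (hiso : ∀ (A B : Type u) [Group A] [Group B], (A ≃* B) → P A → P B)
    (hsub : ∀ (A : Type u) [Group A] (K : Subgroup A), P A → P K)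
    {A : Type u} [Group A] {K L : Subgroup A} (h : K ≤ L) (hL : P L) : P K :=
  hiso _ _ (Subgroup.subgroupOfEquivOfLe h) (hsub L (K.subgroupOf L) hL)

theorem of_inj (hiso : ∀ (A B : Type u) [Group A] [Group B], (A ≃* B) → P A → P B)
    {A B : Type u} [Group A] [Group B] (f : A →* B) (hf : Function.Injective f)
    (hB : LocallyUpToPowers P B) : LocallyUpToPowers P A := by
  intro k γ
  obtain ⟨t, ht, hP⟩ := hB k fun i => f (γ i)
  refine ⟨t, ht, ?_⟩
  have e : Subgroup.closure (Set.range fun i => f (γ i) ^ t i)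
      = (Subgroup.closure (Set.range fun i => γ i ^ t i)).map f := by
    rw [MonoidHom.map_closure, ← Set.range_comp]
    congr 2; funext i; simp
  rw [e] at hP
  exact hiso _ _ (Subgroup.equivMapOfInjective _ f hf).symm hP

theorem of_pow (hiso : ∀ (A B : Type u) [Group A] [Group B], (A ≃* B) → P A → P B)
    {N A : Type u} [Group N] [Group A] (f : N →* A) (hf : Function.Injective f)
    (m : ℕ) (hm : 0 < m) (hpow : ∀ a, a ^ m ∈ f.range)
    (hN : LocallyUpToPowers P N) : LocallyUpToPowers P A := by
  intro k γ
  choose ν hν using fun i => hpow (γ i)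
  obtain ⟨t, ht, hP⟩ := hN k ν
  refine ⟨fun i => m * t i, fun i => Nat.mul_pos hm (ht i), ?_⟩
  have e : Subgroup.closure (Set.range fun i => γ i ^ (m * t i))
      = (Subgroup.closure (Set.range fun i => ν i ^ t i)).map f := by
    rw [MonoidHom.map_closure, ← Set.range_comp]
    congr 2; funext i; simp [hν, pow_mul]
  rw [e]
  exact hiso _ _ (Subgroup.equivMapOfInjective _ f hf) hP

theorem prod (hiso : ∀ (A B : Type u) [Group A] [Group B], (A ≃* B) → P A → P B)
    (hsub : ∀ (A : Type u) [Group A] (K : Subgroup A), P A → P K)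
    (hprod : ∀ (A B : Type u) [Group A] [Group B], P A → P B → P (A × B))
    {A B : Type u} [Group A] [Group B]
    (hA : LocallyUpToPowers P A) (hB : LocallyUpToPowers P B) :
    LocallyUpToPowers P (A × B) := by
  intro k γ
  obtain ⟨t, ht, hP⟩ := hA k fun i => (γ i).1
  obtain ⟨s, hs, hQ⟩ := hB k fun i => (γ i).2
  refine ⟨fun i => t i * s i, fun i => Nat.mul_pos (ht i) (hs i), ?_⟩
  refine of_le hiso hsub ?_ (hiso _ _ (Subgroup.prodEquiv _ _).symm (hprod _ _ hP hQ))
  rw [Subgroup.closure_le]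
  rintro _ ⟨i, rfl⟩
  refine Subgroup.mem_prod.2 ⟨?_, ?_⟩
  · show ((γ i) ^ (t i * s i)).1 ∈ _
    rw [Prod.pow_fst, pow_mul]
    exact Subgroup.pow_mem _ (Subgroup.subset_closure (Set.mem_range_self i)) _
  · show ((γ i) ^ (t i * s i)).2 ∈ _
    rw [Prod.pow_snd, mul_comm, pow_mul]
    exact Subgroup.pow_mem _ (Subgroup.subset_closure (Set.mem_range_self i)) _

theorem torsion (hiso : ∀ (A B : Type u) [Group A] [Group B], (A ≃* B) → P A → P B)
    {G A : Type u} [Group G] [Group A] (hG : LocallyUpToPowers P G)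
    (hA : ∀ a : A, IsOfFinOrder a) : LocallyUpToPowers P A := by
  intro k γ
  obtain ⟨t, -, hP⟩ := hG 0 fun _ => 1
  refine ⟨fun i => orderOf (γ i), fun i => (hA _).orderOf_pos, ?_⟩
  have e1 : Subgroup.closure (Set.range fun i : Fin 0 => (1 : G) ^ t i) = ⊥ := by
    simp
  have e2 : Subgroup.closure (Set.range fun i => γ i ^ orderOf (γ i)) = ⊥ := by
    rw [Subgroup.closure_eq_bot_iff]
    rintro _ ⟨i, rfl⟩
    simp [pow_orderOf_eq_one]
  rw [e1] at hP
  rw [e2]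
  exact hiso _ _ (MulEquiv.ofUnique) hP

theorem pi (hiso : ∀ (A B : Type u) [Group A] [Group B], (A ≃* B) → P A → P B)
    (hsub : ∀ (A : Type u) [Group A] (K : Subgroup A), P A → P K)
    (hprod : ∀ (A B : Type u) [Group A] [Group B], P A → P B → P (A × B))
    {A : Type u} [Group A] (hA : LocallyUpToPowers P A) (X : Type) [Finite X] :
    LocallyUpToPowers P (X → A) := by
  induction X using Finite.induction_empty_option with
  | of_equiv e ih =>
    refine of_inj hiso (⟨⟨fun f x => f (e x), rfl⟩, fun _ _ => rfl⟩ : (_ → A) →* (_ → A)) ?_ ih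
    intro f g h
    funext y
    have := congrFun h (e.symm y)
    simpa using this
  | h_empty =>
    refine torsion hiso hA fun a => ?_
    rw [Subsingleton.elim a 1]; exact IsOfFinOrder.one
  | h_option ih =>
    refine of_inj hiso (⟨⟨fun f => (fun x => f (some x), f none), rfl⟩, fun _ _ => rfl⟩ :
      (Option _ → A) →* ((_ → A) × A)) ?_ (prod hiso hsub hprod ih hA)
    intro f g h
    have h1 := congrArg Prod.fst h
    have h2 := congrArg Prod.snd h
    funext x
    cases x with
    | none => exact h2
    | some x => exact congrFun h1 x

end

theorem exists_alpha (G : Type u) [Group G] (hfg : Group.FG G) :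
    ∃ (X : Type) (_ : Fintype X) (α : G →* (X → G)), 5 ≤ Nat.card X ∧ Function.Injective α ∧
      ∀ g, ∏ x, Abelianization.of (α g x) = 1 := by
  classical
  have : Group.FG (Abelianization G) := inferInstanceAs (Group.FG (G ⧸ commutator G))
  obtain ⟨ι, j, _, _, p, hp, e, ⟨E⟩⟩ :=
    CommGroup.equiv_free_prod_prod_multiplicative_zmod (Abelianization G)
  have hsurj : Function.Surjective (Abelianization.of : G →* _) := QuotientGroup.mk_surjective
  choose t ht using fun i : j => hsurj (E.symm (Pi.mulSingle i (Multiplicative.ofAdd (1:ℤ)), 1))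
  let M := ∏ i, p i ^ e i
  have hM : 0 < M := Finset.prod_pos fun i _ => pow_pos (hp i).pos _
  let a : j → G →* Multiplicative ℤ := fun i =>
    (Pi.evalMonoidHom _ i).comp ((MonoidHom.fst _ _).comp (E.toMonoidHom.comp Abelianization.of))
  let β : Option j → G →* G := fun o => o.elim (MonoidHom.id G)
    fun i => (zpowersHom G (t i)⁻¹).comp (a i)
  refine ⟨Fin (5 * M) × Option j, inferInstance, MonoidHom.mk' (fun g x => β x.2 g) ?_, ?_, ?_, ?_⟩
  · intro g h; funext x; simp
  · rw [Nat.card_prod, Nat.card_eq_fintype_card, Nat.card_eq_fintype_card, Fintype.card_fin,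
      Fintype.card_option]
    nlinarith [Nat.zero_le (Fintype.card j)]
  · intro g h hgh
    exact congrFun hgh (⟨0, by omega⟩, none)
  · intro g
    have hE : ∀ c, (E c).1 = 1 → c ^ (5 * M) = 1 := by
      intro c hc
      apply E.injective
      rw [map_pow, map_one]
      ext1
      · rw [Prod.pow_fst, hc, one_pow]; rfl
      · rw [Prod.pow_snd]
        funext i
        obtain ⟨m, hm⟩ := Finset.dvd_prod_of_mem (fun i => p i ^ e i) (Finset.mem_univ i)
        have hm' : 5 * M = (p i ^ e i) * (5 * m) := by
          show 5 * ∏ i, p i ^ e i = _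
          rw [hm]; ring
        rw [Pi.pow_apply, hm', pow_mul]
        have : ∀ z : Multiplicative (ZMod (p i ^ e i)), z ^ (p i ^ e i) = 1 := by
          intro z
          apply Multiplicative.toAdd.injective
          simp
        rw [this, one_pow]; rfl
    show ∏ x : Fin (5 * M) × Option j, Abelianization.of (β x.2 g) = 1
    rw [Fintype.prod_prod_type]
    simp only [Finset.prod_const, Finset.card_univ, Fintype.card_fin]
    apply hE
    rw [Fintype.prod_option]
    simp only [map_mul, map_prod, Prod.fst_mul, Prod.fst_prod]
    have h1 : ∀ i, (E (Abelianization.of (β (some i) g))).1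
        = Pi.mulSingle i ((E (Abelianization.of g)).1 i)⁻¹ := by
      intro i
      show (E (Abelianization.of ((zpowersHom G (t i)⁻¹) (a i g)))).1 = _
      rw [zpowersHom_apply, map_zpow, map_inv, ht, map_zpow, map_inv, E.apply_symm_apply]
      have hz : ∀ (q : (j → Multiplicative ℤ) × ((i : ι) → Multiplicative (ZMod (p i ^ e i))))
          (n : ℤ), (q ^ n).1 = q.1 ^ n := fun q n => map_zpow (MonoidHom.fst _ _) q n
      rw [hz, Prod.fst_inv]
      rw [← Pi.mulSingle_inv, ← Pi.mulSingle_zpow]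
      congr 1
      apply Multiplicative.toAdd.injective
      simp [a]
    simp only [h1]
    rw [Finset.univ_prod_mulSingle]
    show (E (Abelianization.of g)).1 * ((E (Abelianization.of g)).1)⁻¹ = 1
    exact mul_inv_cancel _

end LUP

namespace Wr

open scoped commutatorElement

variable {X : Type} [Fintype X] [DecidableEq X] {A : Type u} [Group A]

/-- Permutation action on functions. -/
def act (X : Type) (A : Type u) [Group A] : Equiv.Perm X →* MulAut (X → A) where
  toFun σ :=
    { toFun := fun f x => f (σ⁻¹ x)
      invFun := fun f x => f (σ x)
      left_inv := fun f => by simp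
      right_inv := fun f => by simp
      map_mul' := fun _ _ => rfl }
  map_one' := rfl
  map_mul' _ _ := rfl

theorem act_apply (σ : Equiv.Perm X) (f : X → A) (x : X) : act X A σ f x = f (σ⁻¹ x) := rfl

theorem act_single (σ : Equiv.Perm X) (i : X) (a : A) :
    act X A σ (Pi.mulSingle i a) = Pi.mulSingle (σ i) a := by
  funext x
  rw [act_apply, Pi.mulSingle_apply, Pi.mulSingle_apply]
  simp only [Equiv.Perm.inv_eq_iff_eq]

def actAlt (X : Type) [Fintype X] [DecidableEq X] (A : Type u) [Group A] :
    alternatingGroup X →* MulAut (X → A) := (act X A).comp (alternatingGroup X).subtype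

abbrev W (X : Type) [Fintype X] [DecidableEq X] (A : Type u) [Group A] : Type u :=
  (X → A) ⋊[actAlt X A] (alternatingGroup X)

def u (i j : X) (s : A) : X → A := Pi.mulSingle i s * Pi.mulSingle j s⁻¹

def gens (S : Set A) : Set (W X A) :=
  Set.range (SemidirectProduct.inr : alternatingGroup X →* W X A) ∪
    {w | ∃ i j : X, i ≠ j ∧ ∃ s ∈ S, w = SemidirectProduct.inl (u i j s)}

def H (X : Type) [Fintype X] [DecidableEq X] (S : Set A) : Subgroup (W X A) :=
  Subgroup.closure (gens S)

theorem H_fg (S : Set A) (hS : S.Finite) : Group.FG (H X S) := by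
  rw [Group.fg_iff_subgroup_fg, Subgroup.fg_iff]
  refine ⟨_, rfl, (Set.finite_range _).union ?_⟩
  have : Finite S := hS
  refine (Set.finite_range fun p : X × X × S => (SemidirectProduct.inl (u p.1 p.2.1 p.2.2.1) : W X A)).subset ?_
  rintro _ ⟨i, j, -, s, hs, rfl⟩
  exact ⟨(i, j, ⟨s, hs⟩), rfl⟩

theorem inr_mem (S : Set A) (σ : alternatingGroup X) :
    (SemidirectProduct.inr σ : W X A) ∈ H X S := Subgroup.subset_closure (Or.inl ⟨σ, rfl⟩)

theorem u_mem (S : Set A) {i j : X} (h : i ≠ j) {s : A} (hs : s ∈ S) :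
    (SemidirectProduct.inl (u i j s) : W X A) ∈ H X S :=
  Subgroup.subset_closure (Or.inr ⟨i, j, h, s, hs, rfl⟩)

theorem exists_ne (h5 : 5 ≤ Nat.card X) (s : Finset X) (hs : s.card ≤ 3) : ∃ k, k ∉ s := by
  by_contra hc
  push Not at hc
  have : Finset.univ ⊆ s := fun x _ => hc x
  have := Finset.card_le_card this
  rw [Finset.card_univ, ← Nat.card_eq_fintype_card] at this
  omega

theorem H_perfect (h5 : 5 ≤ Nat.card X) (S : Set A) : commutator (H X S) = ⊤ := by
  have key : H X S ≤ ⁅H X S, H X S⁆ := by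
    conv_lhs => rw [H]
    rw [Subgroup.closure_le]
    rintro _ (⟨σ, rfl⟩ | ⟨i, j, hij, s, hs, rfl⟩)
    · have h1 : σ ∈ commutator (alternatingGroup X) := by
        rw [commutator_alternatingGroup_eq_top h5]; trivial
      have h2 : (SemidirectProduct.inr σ : W X A) ∈ (commutator (alternatingGroup X)).map
        (SemidirectProduct.inr : alternatingGroup X →* W X A) := ⟨σ, h1, rfl⟩
      rw [commutator_def, Subgroup.map_commutator] at h2
      refine Subgroup.commutator_mono ?_ ?_ h2 <;>
      · rintro _ ⟨τ, -, rfl⟩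
        exact inr_mem S τ
    · obtain ⟨k, hk⟩ := exists_ne h5 {i, j} (le_trans Finset.card_le_two (by norm_num))
      obtain ⟨l, hl⟩ := exists_ne h5 {i, j, k} Finset.card_le_three
      simp only [Finset.mem_insert, Finset.mem_singleton, not_or] at hk hl
      let σ : alternatingGroup X := ⟨Equiv.swap i l * Equiv.swap i j,
        (Equiv.Perm.isThreeCycle_swap_mul_swap_same (Ne.symm hl.1) hij hl.2.1).mem_alternatingGroup⟩
      have hσi : (σ : Equiv.Perm X) i = j := by
        show Equiv.swap i l (Equiv.swap i j i) = j
        rw [Equiv.swap_apply_left, Equiv.swap_apply_of_ne_of_ne (Ne.symm hij) (Ne.symm hl.2.1)]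
      have hσk : (σ : Equiv.Perm X) k = k := by
        show Equiv.swap i l (Equiv.swap i j k) = k
        rw [Equiv.swap_apply_of_ne_of_ne hk.1 hk.2,
          Equiv.swap_apply_of_ne_of_ne hk.1 (Ne.symm hl.2.2)]
      have e : (SemidirectProduct.inl (u i j s) : W X A)
          = ⁅(SemidirectProduct.inl (u i k s) : W X A), (SemidirectProduct.inr σ : W X A)⁆ := by
        rw [commutatorElement_def, ← map_inv, ← map_inv, mul_assoc, mul_assoc,
          ← mul_assoc (SemidirectProduct.inr σ : W X A), ← SemidirectProduct.inl_aut, ← map_mul]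
        congr 1
        show _ = u i k s * act X A σ (u i k s)⁻¹
        simp only [u, map_mul, map_inv, act_single, hσi, hσk]
        funext x
        simp only [Pi.mul_apply, Pi.inv_apply, Pi.mulSingle_apply]
        by_cases h1 : x = i
        · subst h1; simp [hij, Ne.symm hk.1]
        by_cases h2 : x = j
        · subst h2; simp [h1, Ne.symm hk.2]
        by_cases h3 : x = k
        · subst h3; simp [h1, h2]
        simp [h1, h2, h3]
      rw [SetLike.mem_coe, e]
      exact Subgroup.commutator_mem_commutator (u_mem S (Ne.symm hk.1) hs) (inr_mem S σ)
  rw [eq_top_iff]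
  intro x _
  have h1 := key x.2
  rw [← Subgroup.map_subtype_commutator] at h1
  obtain ⟨y, hy, e⟩ := h1
  have : y = x := Subtype.ext e
  exact this ▸ hy

/-- The base part of `H`. -/
def Hb (X : Type) [Fintype X] [DecidableEq X] (S : Set A) : Subgroup (X → A) :=
  (H X S).comap SemidirectProduct.inl

theorem exists_pair (S : Set A) (hS : Subgroup.closure S = ⊤) {i j : X} (hij : i ≠ j) (a : A) :
    ∃ b, Abelianization.of b = (Abelianization.of a)⁻¹ ∧
      Pi.mulSingle i a * Pi.mulSingle j b ∈ Hb X S := by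
  have ha : a ∈ Subgroup.closure S := by rw [hS]; trivial
  induction ha using Subgroup.closure_induction with
  | mem s hs => exact ⟨s⁻¹, by simp, u_mem S hij hs⟩
  | one => exact ⟨1, by simp, by simp⟩
  | mul x y _ _ hx hy =>
    obtain ⟨b, hb, hb'⟩ := hx
    obtain ⟨c, hc, hc'⟩ := hy
    refine ⟨b * c, by rw [map_mul, map_mul, hb, hc, mul_inv], ?_⟩
    have := (Hb X S).mul_mem hb' hc'
    convert this using 1
    funext z
    simp only [Pi.mul_apply, Pi.mulSingle_apply]
    by_cases h1 : z = i
    · subst h1; simp [hij]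
    · simp [h1]; split_ifs <;> simp
  | inv x _ hx =>
    obtain ⟨b, hb, hb'⟩ := hx
    refine ⟨b⁻¹, by rw [map_inv, map_inv, hb], ?_⟩
    have := (Hb X S).inv_mem hb'
    convert this using 1
    funext z
    simp only [Pi.mul_apply, Pi.inv_apply, Pi.mulSingle_apply]
    by_cases h1 : z = i
    · subst h1; simp [hij]
    · simp [h1]; split_ifs <;> simp

theorem single_mem (h5 : 5 ≤ Nat.card X) (S : Set A) (hS : Subgroup.closure S = ⊤) (i : X) (a : A)
    (ha : Abelianization.of a = 1) : Pi.mulSingle i a ∈ Hb X S := by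
  have ha' : a ∈ commutator A := (QuotientGroup.eq_one_iff a).1 ha
  have : commutator A ≤ (Hb X S).comap (MonoidHom.mulSingle (fun _ : X => A) i) := by
    rw [commutator_def, Subgroup.commutator_le]
    intro x _ y _
    obtain ⟨j, hj⟩ := exists_ne h5 {i} (by simp)
    obtain ⟨k, hk⟩ := exists_ne h5 {i, j} (le_trans Finset.card_le_two (by norm_num))
    simp only [Finset.mem_insert, Finset.mem_singleton, not_or] at hj hk
    obtain ⟨b, -, hb⟩ := exists_pair S hS (Ne.symm hj) x
    obtain ⟨c, -, hc⟩ := exists_pair S hS (Ne.symm hk.1) y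
    show Pi.mulSingle i ⁅x, y⁆ ∈ Hb X S
    have h := (Hb X S).mul_mem ((Hb X S).mul_mem ((Hb X S).mul_mem hb hc) ((Hb X S).inv_mem hb))
      ((Hb X S).inv_mem hc)
    convert h using 1
    funext z
    simp only [Pi.mul_apply, Pi.inv_apply, Pi.mulSingle_apply, commutatorElement_def]
    by_cases h1 : z = i
    · subst h1; simp [Ne.symm hj, Ne.symm hk.1]
    by_cases h2 : z = j
    · subst h2; simp [h1, Ne.symm hk.2]
    by_cases h3 : z = k
    · subst h3; simp [h1, h2]
    simp [h1, h2, h3]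
  exact this ha'

def tot (X : Type) [Fintype X] (A : Type u) [Group A] : (X → A) →* Abelianization A :=
  MonoidHom.mk' (fun f => ∏ x, Abelianization.of (f x)) fun f g => by
    simp [Finset.prod_mul_distrib]

theorem tot_apply (f : X → A) : tot X A f = ∏ x, Abelianization.of (f x) := rfl

theorem tot_single (i : X) (a : A) : tot X A (Pi.mulSingle i a) = Abelianization.of a := by
  rw [tot_apply, Fintype.prod_eq_single i]
  · simp
  · intro x hx; simp [hx]

theorem mem_Hb (h5 : 5 ≤ Nat.card X) (S : Set A) (hS : Subgroup.closure S = ⊤) (s : Finset X) :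
    ∀ f : X → A, (∀ x, x ∉ s → f x = 1) → tot X A f = 1 → f ∈ Hb X S := by
  induction s using Finset.induction_on with
  | empty =>
    intro f hf _
    have : f = 1 := funext fun x => hf x (by simp)
    rw [this]; exact (Hb X S).one_mem
  | insert a s ha ih =>
    intro f hf ht
    by_cases hs : s = ∅
    · subst hs
      have e : f = Pi.mulSingle a (f a) := by
        funext x
        by_cases hx : x = a
        · subst hx; simp
        · rw [Pi.mulSingle_eq_of_ne hx]; exact hf x (by simpa using hx)
      rw [e] at ht ⊢
      rw [tot_single] at ht
      exact single_mem h5 S hS a _ ht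
    · obtain ⟨b, hb⟩ := Finset.nonempty_iff_ne_empty.2 hs
      have hab : a ≠ b := fun h => ha (h ▸ hb)
      obtain ⟨c, hc, hm⟩ := exists_pair S hS hab (f a)
      have h1 := ih ((Pi.mulSingle a (f a) * Pi.mulSingle b c)⁻¹ * f) ?_ ?_
      · simpa only [mul_inv_cancel_left] using (Hb X S).mul_mem hm h1
      · intro x hx
        have hxb : x ≠ b := fun h => hx (h ▸ hb)
        by_cases hxa : x = a
        · subst hxa; simp [hab]
        · simp [hxa, hxb, hf x (by simp [hxa, hx])]
      · rw [map_mul, map_inv, map_mul, tot_single, tot_single, hc, ht]; simp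

end Wr


/-- Let `P` be an isomorphism-invariant property of groups closed under subgroups and
direct products of two groups. Every finitely generated, residually finite group that
is locally `P` up to powers embeds into a finitely generated, perfect, infinite group
that is locally `P` up to powers. -/
theorem embeds_into_fg_perfect_group_locally_P
    (P : (H : Type u) → [inst : Group H] → Prop)
    (hiso : ∀ (A B : Type u) [Group A] [Group B], (A ≃* B) → P A → P B)
    (hsub : ∀ (A : Type u) [Group A] (K : Subgroup A), P A → P K)
    (hprod : ∀ (A B : Type u) [Group A] [Group B], P A → P B → P (A × B))
    {G : Type u} [Group G]
    (hfg : Group.FG G) (hrf : ResiduallyFinite G) (hloc : LocallyUpToPowers P G) :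
    ∃ (Γ : Type u) (_ : Group Γ) (φ : G →* Γ),
      Function.Injective φ ∧
      Group.FG Γ ∧
      commutator Γ = ⊤ ∧
      Infinite Γ ∧
      LocallyUpToPowers P Γ := by
  classical
  let A := G × ULift.{u} GS.Γ
  have hA : LocallyUpToPowers P A := by
    refine LUP.prod hiso hsub hprod hloc (LUP.torsion hiso hloc fun a => ?_)
    exact (MulEquiv.ulift : ULift.{u} GS.Γ ≃* GS.Γ).symm.toMonoidHom.isOfFinOrder
      (GS.Γ_tors a.down)
  have hAfg : Group.FG A := by
    have h1 : Group.FG GS.Γ := GS.Γ_fg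
    have h2 : Group.FG (ULift.{u} GS.Γ) :=
      Group.fg_of_surjective (f := (MulEquiv.ulift : ULift.{u} GS.Γ ≃* GS.Γ).symm.toMonoidHom)
        (MulEquiv.surjective _)
    exact inferInstance
  have hAinf : Infinite A := by
    have h1 : Infinite GS.Γ := GS.Γ_inf
    exact Infinite.of_surjective (fun a : A => a.2.down) fun g => ⟨(1, ⟨g⟩), rfl⟩
  obtain ⟨X, _, α, h5, hα, htot⟩ := LUP.exists_alpha A hAfg
  obtain ⟨S, hS, hSfin⟩ := Group.fg_iff.1 hAfg
  have hmem : ∀ a, (SemidirectProduct.inl (α a) : Wr.W X A) ∈ Wr.H X S := fun a =>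
    Wr.mem_Hb h5 S hS Finset.univ (α a) (fun x hx => absurd (Finset.mem_univ x) hx) (htot a)
  let ψ : A →* Wr.H X S :=
    ((SemidirectProduct.inl : (X → A) →* Wr.W X A).comp α).codRestrict (Wr.H X S) hmem
  have hψ : Function.Injective ψ := by
    intro a b h
    exact hα (SemidirectProduct.inl_injective (congrArg Subtype.val h))
  refine ⟨Wr.H X S, inferInstance, ψ.comp (MonoidHom.inl _ _), ?_, Wr.H_fg S hSfin,
    Wr.H_perfect h5 S, Infinite.of_injective ψ hψ, ?_⟩
  · intro a b h
    exact congrArg Prod.fst (hψ h)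
  · refine LUP.of_inj hiso (Wr.H X S).subtype Subtype.val_injective ?_
    refine LUP.of_pow hiso (SemidirectProduct.inl : (X → A) →* Wr.W X A)
      SemidirectProduct.inl_injective (Nat.card (alternatingGroup X)) Nat.card_pos ?_
      (LUP.pi hiso hsub hprod hA X)
    intro a
    rw [SemidirectProduct.range_inl_eq_ker_rightHom, MonoidHom.mem_ker, map_pow, pow_card_eq_one']
end
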